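/- Let G be a finitely generated group and let k > 2 be an integer. Then G is non-amenable if and only if G has a Cayley graph (with respect to some finite generating set) admitting a spanning tree that is regular of degree k. -/

import Mathlib

open scoped Pointwise

/-- `S` is a finite generating set of the group `G`. -/
def IsFinGenSet {G : Type*} [Group G] (S : Set G) : Prop :=
  S.Finite ∧ Subgroup.closure S = ⊤

/-- The left-invariant word-length distance associated to a generating set `S`:
`wordDist S g h` is the least `n` with `g⁻¹ * h ∈ (S ∪ S⁻¹) ^ n`. -/
noncomputable def wordDist {G : Type*} [Group G] (S : Set G) (g h : G) : ℕ :=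
  sInf {n : ℕ | g⁻¹ * h ∈ (S ∪ S⁻¹) ^ n}

/-- The word metric as a real-valued distance function. -/
noncomputable def wordMetric {G : Type*} [Group G] (S : Set G) : G → G → ℝ :=
  fun g h => (wordDist S g h : ℝ)

/-- The (right) Cayley graph of a group w.r.t. a set `S`: `g` and `gs` are adjacent
for `s ∈ S ∪ S⁻¹`. -/
def cayleyGraph {G : Type*} [Group G] (S : Set G) : SimpleGraph G :=
  SimpleGraph.fromRel (fun g h => g⁻¹ * h ∈ S ∪ S⁻¹)

/-- `nbhd Γ k S` is the union of `S` with all vertices within path-distance `k` of `S`. -/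
def nbhd {V : Type*} (Γ : SimpleGraph V) (k : ℕ) (S : Finset V) : Set V :=
  {v : V | ∃ s ∈ S, Γ.Reachable s v ∧ Γ.dist s v ≤ k}

/-- A graph is non-amenable if there are `C > 1` and `k ∈ ℕ` with `|N_k(S)| ≥ C·|S|`
for every finite vertex set `S`. -/
def GraphNonamenable {V : Type*} (Γ : SimpleGraph V) : Prop :=
  ∃ C : ℝ, 1 < C ∧ ∃ k : ℕ, ∀ S : Finset V,
    (nbhd Γ k S).Infinite ∨ C * S.card ≤ ((nbhd Γ k S).ncard : ℝ)

/-- A finitely generated group is non-amenable if its Cayley graphs (w.r.t. finite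
generating sets) are non-amenable. -/
def GroupNonamenable (G : Type*) [Group G] : Prop :=
  ∀ S : Set G, IsFinGenSet S → GraphNonamenable (cayleyGraph S)

/-!
In a non-amenable locally finite graph, Hall's theorem assigns to each vertex `k + 1` private
vertices at bounded distance, so there is a self-map of bounded displacement with all fibers of
size at least `k + 1`. Cutting its cycles leaves a forest of minimal degree at least `k`, which
extends to a spanning tree of a power of the graph. Rehanging the surplus children of each vertex
on their preceding siblings, from the root outwards, makes all degrees equal to `k`.

Conversely, the parent map of a spanning tree of degree `k > 2` has bounded displacement and fibers
with at least two points, so a neighborhood of fixed radius is at least twice as large as the set.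

The tree lives in a power of a Cayley graph, which is the Cayley graph of a ball.
-/

open Function SimpleGraph

section GraphPower

variable {V : Type*} {Γ Δ : SimpleGraph V} {m n : ℕ} {u v : V}

lemma edist_le_natCast_iff : Γ.edist u v ≤ n ↔ ∃ w : Γ.Walk u v, w.length ≤ n := by
  refine ⟨fun h => ?_, fun ⟨w, hw⟩ => (edist_le w).trans (mod_cast hw)⟩
  obtain ⟨w, hw⟩ := exists_walk_of_edist_ne_top (ne_top_of_le_ne_top (ENat.natCast_ne_top n) h)
  rw [← hw] at h
  exact ⟨w, mod_cast h⟩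

lemma edist_map_le {W : Type*} {Δ : SimpleGraph W} (f : Γ →g Δ) (u v : V) :
    Δ.edist (f u) (f v) ≤ Γ.edist u v := by
  rw [Γ.edist_eq_sInf]
  refine le_sInf ?_
  rintro _ ⟨w, rfl⟩
  exact (edist_le (w.map f)).trans_eq (by rw [Walk.length_map])

/-- The `n`-th power of a graph: distinct vertices at distance at most `n` are adjacent. The
extended distance is used because `SimpleGraph.dist` vanishes between different components. -/
def graphPower (Γ : SimpleGraph V) (n : ℕ) : SimpleGraph V where
  Adj u v := u ≠ v ∧ Γ.edist u v ≤ n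
  symm := ⟨fun _ _ h => ⟨h.1.symm, edist_comm.trans_le h.2⟩⟩
  loopless := ⟨fun _ h => h.1 rfl⟩

lemma edist_le_of_le_graphPower (h : Δ ≤ graphPower Γ n) (huv : Δ.edist u v ≤ m) :
    Γ.edist u v ≤ (n * m : ℕ) := by
  obtain ⟨w, hw⟩ := edist_le_natCast_iff.1 huv
  induction w generalizing m with
  | nil => simp
  | @cons u a v hua w ih =>
    obtain ⟨l, rfl⟩ : ∃ l, m = l + 1 := Nat.exists_eq_add_of_le' (Nat.one_le_of_lt hw)
    have hw' : w.length ≤ l := Nat.le_of_succ_le_succ hw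
    calc Γ.edist u v ≤ Γ.edist u a + Γ.edist a v := Γ.edist_triangle
      _ ≤ n + (n * l : ℕ) := add_le_add (h hua).2 (ih (edist_le_natCast_iff.2 ⟨w, hw'⟩) hw')
      _ = (n * (l + 1) : ℕ) := by push_cast; ring

lemma graphPower_le_graphPower_mul (h : Δ ≤ graphPower Γ n) :
    graphPower Δ m ≤ graphPower Γ (n * m) :=
  fun _ _ huv => ⟨huv.1, edist_le_of_le_graphPower h huv.2⟩

lemma graphPower_mono (h : m ≤ n) : graphPower Γ m ≤ graphPower Γ n :=
  fun _ _ huv => ⟨huv.1, huv.2.trans (mod_cast h)⟩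

lemma le_graphPower (hn : 1 ≤ n) : Γ ≤ graphPower Γ n :=
  fun _ _ huv => ⟨huv.ne, (edist_eq_one_iff_adj.2 huv).trans_le (mod_cast hn)⟩

lemma finite_setOf_edist_le (hΓ : ∀ v, (Γ.neighborSet v).Finite) (n : ℕ) (v : V) :
    {u | Γ.edist v u ≤ n}.Finite := by
  induction n generalizing v with
  | zero => simp
  | succ n ih =>
    refine (((hΓ v).biUnion fun a _ => ih a).insert v).subset fun u hu => ?_
    obtain ⟨w, hw⟩ := edist_le_natCast_iff.1 hu
    cases w with
    | nil => exact Set.mem_insert _ _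
    | cons hva w =>
      exact Or.inr (Set.mem_biUnion hva
        (edist_le_natCast_iff.2 ⟨w, Nat.le_of_succ_le_succ hw⟩))

lemma finite_neighborSet_graphPower (hΓ : ∀ v, (Γ.neighborSet v).Finite) (n : ℕ) (v : V) :
    ((graphPower Γ n).neighborSet v).Finite :=
  (finite_setOf_edist_le hΓ n v).subset fun _ hu => hu.2

lemma mem_nbhd {S : Finset V} : v ∈ nbhd Γ n S ↔ ∃ s ∈ S, Γ.edist s v ≤ n := by
  refine exists_congr fun s => and_congr_right fun _ => ⟨fun ⟨hr, hd⟩ => ?_, fun h => ?_⟩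
  · rw [← hr.coe_dist_eq_edist]
    exact mod_cast hd
  · have hr := reachable_of_edist_ne_top (ne_top_of_le_ne_top (ENat.natCast_ne_top n) h)
    rw [← hr.coe_dist_eq_edist] at h
    exact ⟨hr, mod_cast h⟩

lemma finite_nbhd (hΓ : ∀ v, (Γ.neighborSet v).Finite) (n : ℕ) (S : Finset V) :
    (nbhd Γ n S).Finite :=
  (S.finite_toSet.biUnion fun s _ => finite_setOf_edist_le hΓ n s).subset fun _ hv =>
    have ⟨_, hs, hsv⟩ := mem_nbhd.1 hv
    Set.mem_biUnion hs hsv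

lemma nbhd_subset_nbhd_add {S N : Finset V} (hN : (N : Set V) ⊆ nbhd Γ m S) :
    nbhd Γ n N ⊆ nbhd Γ (m + n) S := by
  intro v hv
  obtain ⟨u, hu, huv⟩ := mem_nbhd.1 hv
  obtain ⟨s, hs, hsu⟩ := mem_nbhd.1 (hN hu)
  exact mem_nbhd.2 ⟨s, hs, Γ.edist_triangle.trans (by push_cast; exact add_le_add hsu huv)⟩

end GraphPower

section BoundedDisplacement

variable {V : Type*} {Γ : SimpleGraph V}

theorem graphNonamenable_of_two_le_encard_fiber {p : V → V} {n : ℕ}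
    (hp : ∀ x, Γ.edist x (p x) ≤ n) (hfiber : ∀ v, 2 ≤ (p ⁻¹' {v}).encard) :
    GraphNonamenable Γ := by
  classical
  refine ⟨2, one_lt_two, n, fun S => or_iff_not_imp_left.2 fun hfin => ?_⟩
  lift nbhd Γ n S to Finset V using Set.not_infinite.1 hfin with N hN
  have two_le_card : ∀ v ∈ S, 2 ≤ (N.bipartiteAbove (fun v x => p x = v) v).card := by
    intro v hv
    have hsub : p ⁻¹' {v} ⊆ N.bipartiteAbove (fun v x => p x = v) v := by
      rintro x rfl
      have hx : x ∈ (N : Set V) := hN ▸ mem_nbhd.2 ⟨p x, hv, edist_comm.trans_le (hp x)⟩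
      simpa [Finset.bipartiteAbove] using hx
    have := (hfiber v).trans (Set.encard_le_encard hsub)
    rw [Set.encard_coe_eq_coe_finsetCard] at this
    exact mod_cast this
  have card_le_one : ∀ x ∈ N, (S.bipartiteBelow (fun v x => p x = v) x).card ≤ 1 := fun x _ =>
    Finset.card_le_one.2 fun a ha b hb =>
      ((Finset.mem_bipartiteBelow _).1 ha).2.symm.trans ((Finset.mem_bipartiteBelow _).1 hb).2
  have := Finset.card_mul_le_card_mul _ two_le_card card_le_one
  rw [Set.ncard_coe_finset]
  norm_cast
  linarith

lemma GraphNonamenable.exists_mul_card_le_ncard_nbhd (h : GraphNonamenable Γ)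
    (hΓ : ∀ v, (Γ.neighborSet v).Finite) (D : ℕ) :
    ∃ n, ∀ S : Finset V, D * S.card ≤ (nbhd Γ n S).ncard := by
  obtain ⟨C, hC, m, hm⟩ := h
  have pow_mul_card_le (j : ℕ) (S : Finset V) :
      C ^ j * S.card ≤ ((nbhd Γ (m * j) S).ncard : ℝ) := by
    induction j with
    | zero =>
      have hsub : (S : Set V) ⊆ nbhd Γ (m * 0) S := fun s hs => mem_nbhd.2 ⟨s, hs, by simp⟩
      have := Set.ncard_le_ncard hsub (finite_nbhd hΓ _ S)
      rw [Set.ncard_coe_finset] at this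
      simpa using this
    | succ j ih =>
      obtain ⟨N, hN⟩ := (finite_nbhd hΓ (m * j) S).exists_finset_coe
      rw [← hN, Set.ncard_coe_finset] at ih
      calc C ^ (j + 1) * S.card = C * (C ^ j * S.card) := by ring
        _ ≤ C * N.card := by gcongr
        _ ≤ (nbhd Γ m N).ncard := (hm N).resolve_left (finite_nbhd hΓ m N).not_infinite
        _ ≤ (nbhd Γ (m * (j + 1)) S).ncard :=
          mod_cast Set.ncard_le_ncard (nbhd_subset_nbhd_add hN.le) (finite_nbhd hΓ _ S)
  obtain ⟨j, hj⟩ := pow_unbounded_of_one_lt (D : ℝ) hC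
  refine ⟨m * j, fun S => ?_⟩
  have : (D : ℝ) * S.card ≤ (nbhd Γ (m * j) S).ncard :=
    (mul_le_mul_of_nonneg_right hj.le (by positivity)).trans (pow_mul_card_le j S)
  exact mod_cast this

theorem GraphNonamenable.exists_injective_edist_le (h : GraphNonamenable Γ)
    (hΓ : ∀ v, (Γ.neighborSet v).Finite) (D : ℕ) :
    ∃ (n : ℕ) (φ : V × Fin D → V), Injective φ ∧ ∀ x, Γ.edist x.1 (φ x) ≤ n := by
  classical
  obtain ⟨n, hn⟩ := h.exists_mul_card_le_ncard_nbhd hΓ D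
  let t : V × Fin D → Finset V := fun x => (finite_setOf_edist_le hΓ n x.1).toFinset
  have hall : ∀ s : Finset (V × Fin D), s.card ≤ (s.biUnion t).card := by
    intro s
    have hst : nbhd Γ n (s.image Prod.fst) = (s.biUnion t : Finset V) := by
      ext v
      simp [t, mem_nbhd]
    calc s.card ≤ (s.image Prod.fst ×ˢ Finset.univ).card :=
          Finset.card_le_card fun x hx =>
            Finset.mem_product.2 ⟨Finset.mem_image_of_mem _ hx, Finset.mem_univ _⟩
      _ = D * (s.image Prod.fst).card := by simp [mul_comm]
      _ ≤ (s.biUnion t).card := by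
          simpa only [hst, Set.ncard_coe_finset] using hn (s.image Prod.fst)
  obtain ⟨φ, hφ, hφt⟩ := (Finset.all_card_le_biUnion_card_iff_exists_injective t).1 hall
  exact ⟨n, φ, hφ, fun x => by simpa [t] using hφt x⟩

theorem GraphNonamenable.exists_le_encard_fiber (h : GraphNonamenable Γ)
    (hΓ : ∀ v, (Γ.neighborSet v).Finite) (D : ℕ) :
    ∃ (n : ℕ) (p : V → V), (∀ x, Γ.edist x (p x) ≤ n) ∧ ∀ v, D ≤ (p ⁻¹' {v}).encard := by
  obtain ⟨n, φ, hφ, hφn⟩ := h.exists_injective_edist_le hΓ D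
  refine ⟨n, extend φ Prod.fst id, fun x => ?_, fun v => ?_⟩
  · by_cases hx : ∃ a, φ a = x
    · obtain ⟨a, rfl⟩ := hx
      rw [hφ.extend_apply, edist_comm]
      exact hφn a
    · simp [extend_apply' _ _ _ hx]
  · have hinj : Injective fun i => φ (v, i) := hφ.comp (Prod.mk_right_injective v)
    calc (D : ℕ∞) = (Set.range fun i => φ (v, i)).encard := by
          rw [← Set.image_univ, hinj.encard_image, Set.encard_univ, ENat.card_eq_coe_fintype_card,
            Fintype.card_fin]
      _ ≤ _ := Set.encard_le_encard (Set.range_subset_iff.2 fun i => hφ.extend_apply _ _ _)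

end BoundedDisplacement

section FunctionForest

variable {V : Type*} {p : V → V} {r v x y : V}

/-- The forest of a self-map `p`: every point off the cycles of `p` is joined to its image. -/
def functionForest (p : V → V) : SimpleGraph V :=
  .fromRel fun x y => x ∉ periodicPts p ∧ p x = y

lemma functionForest_adj : (functionForest p).Adj x y ↔
    (x ∉ periodicPts p ∧ p x = y) ∨ (y ∉ periodicPts p ∧ p y = x) := by
  refine ⟨fun h => h.2, fun h => ⟨?_, h⟩⟩
  rintro rfl
  obtain ⟨hx, hpx⟩ := or_self_iff.1 h
  exact hx (mk_mem_periodicPts one_pos hpx)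

lemma isBridge_functionForest (hx : x ∉ periodicPts p) :
    (functionForest p).IsBridge s(x, p x) := by
  -- The orbit of `p x` misses `x`, and only the deleted edge joins points whose orbits visit `x`
  -- to the others.
  have eventually_of_reachable {a b : V}
      (hab : ((functionForest p).deleteEdges {s(x, p x)}).Reachable a b)
      (ha : ∃ n, p^[n] a = x) : ∃ n, p^[n] b = x := by
    obtain ⟨w⟩ := hab
    induction w with
    | nil => exact ha
    | @cons a c _ hac _ ih =>
      obtain ⟨n, hn⟩ := ha
      rw [deleteEdges_adj, functionForest_adj] at hac
      obtain ⟨⟨-, rfl⟩ | ⟨-, rfl⟩, hne⟩ := hac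
      · cases n with
        | zero => exact absurd (by rw [← hn]; rfl) hne
        | succ n => exact ih ⟨n, hn⟩
      · exact ih ⟨n + 1, hn⟩
  refine isBridge_iff.2 fun h => ?_
  obtain ⟨n, hn⟩ := eventually_of_reachable h ⟨0, rfl⟩
  exact hx (mk_mem_periodicPts n.succ_pos hn)

theorem isAcyclic_functionForest (p : V → V) : (functionForest p).IsAcyclic :=
  isAcyclic_iff_forall_adj_isBridge.2 fun _ _ hxy => by
    obtain ⟨hx, rfl⟩ | ⟨hy, rfl⟩ := functionForest_adj.1 hxy
    · exact isBridge_functionForest hx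
    · exact Sym2.eq_swap ▸ isBridge_functionForest hy

lemma functionForest_le_graphPower {Γ : SimpleGraph V} {n : ℕ}
    (h : ∀ x, Γ.edist x (p x) ≤ n) : functionForest p ≤ graphPower Γ n := by
  refine fun x y hxy => ⟨hxy.ne, ?_⟩
  obtain ⟨-, rfl⟩ | ⟨-, rfl⟩ := functionForest_adj.1 hxy
  · exact h x
  · exact edist_comm.trans_le (h y)

lemma encard_fiber_le_encard_neighborSet_add_one (p : V → V) (v : V) :
    (p ⁻¹' {v}).encard ≤ ((functionForest p).neighborSet v).encard + 1 := by
  have hdiff : p ⁻¹' {v} \ periodicPts p ⊆ (functionForest p).neighborSet v :=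
    fun x hx => functionForest_adj.2 (Or.inr ⟨hx.2, hx.1⟩)
  have hinter : (p ⁻¹' {v} ∩ periodicPts p).Subsingleton := fun x hx y hy =>
    (bijOn_periodicPts p).injOn hx.2 hy.2 (hx.1.trans hy.1.symm)
  calc (p ⁻¹' {v}).encard
      = (p ⁻¹' {v} \ periodicPts p).encard + (p ⁻¹' {v} ∩ periodicPts p).encard :=
        (Set.encard_sdiff_add_encard_inter _ _).symm
    _ ≤ _ := add_le_add (Set.encard_le_encard hdiff) (Set.encard_le_one_iff_subsingleton.2 hinter)

/-- `p` is the parent function of a tree on `V` rooted at `r`: it fixes the root and its iterates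
send every vertex to the root. The root thus counts as one of its own children. -/
structure IsParentFunction (p : V → V) (r : V) : Prop where
  root : p r = r
  exists_iterate : ∀ x, ∃ n, p^[n] x = r

namespace IsParentFunction

lemma mem_periodicPts_iff (h : IsParentFunction p r) : x ∈ periodicPts p ↔ x = r := by
  have hr : r ∈ periodicPts p := mk_mem_periodicPts one_pos h.root
  refine ⟨fun hx => ?_, fun hx => hx ▸ hr⟩
  obtain ⟨n, hn⟩ := h.exists_iterate x
  have hbij := bijOn_periodicPts p
  exact hbij.injOn.iterate hbij.mapsTo n hx hr (hn.trans (iterate_fixed h.root n).symm)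

lemma adj_iff (h : IsParentFunction p r) :
    (functionForest p).Adj x y ↔ (x ≠ r ∧ p x = y) ∨ (y ≠ r ∧ p y = x) := by
  simp only [functionForest_adj, h.mem_periodicPts_iff, ne_eq]

lemma edist_parent_le_one (h : IsParentFunction p r) (x : V) :
    (functionForest p).edist x (p x) ≤ 1 := by
  refine edist_le_one_iff_adj_or_eq.2 (or_iff_not_imp_right.2 fun hx => h.adj_iff.2 (Or.inl ?_))
  exact ⟨fun hxr => hx (hxr ▸ h.root.symm), rfl⟩

theorem isTree (h : IsParentFunction p r) : (functionForest p).IsTree := by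
  have reachable_root (n : ℕ) : ∀ x, p^[n] x = r → (functionForest p).Reachable x r := by
    induction n with
    | zero => exact fun x hx => hx ▸ .rfl
    | succ n ih =>
      intro x hx
      obtain rfl | hxr := eq_or_ne x r
      · rfl
      · exact (Adj.reachable (h.adj_iff.2 (Or.inl ⟨hxr, rfl⟩))).trans (ih (p x) hx)
  exact ⟨connected_iff_exists_forall_reachable _ |>.2 ⟨r, fun x =>
    have ⟨n, hn⟩ := h.exists_iterate x
    (reachable_root n x hn).symm⟩, isAcyclic_functionForest p⟩

lemma encard_neighborSet_root_add_one (h : IsParentFunction p r) :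
    ((functionForest p).neighborSet r).encard + 1 = (p ⁻¹' {r}).encard := by
  have : (functionForest p).neighborSet r = p ⁻¹' {r} \ {r} := by
    ext x
    simp [h.adj_iff, and_comm]
  have hr : r ∈ p ⁻¹' {r} := h.root
  rw [this, Set.encard_sdiff_singleton_add_one hr]

lemma encard_neighborSet_of_ne_root (h : IsParentFunction p r) (hv : v ≠ r) :
    ((functionForest p).neighborSet v).encard = (p ⁻¹' {v}).encard + 1 := by
  have hpv : p v ∉ p ⁻¹' {v} := fun hpv =>
    hv (h.mem_periodicPts_iff.1 (mk_mem_periodicPts two_pos hpv))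
  have : (functionForest p).neighborSet v = insert (p v) (p ⁻¹' {v}) := by
    ext x
    have hxr : p x = v → x ≠ r := by
      rintro rfl rfl
      exact hv h.root
    simp only [mem_neighborSet, h.adj_iff, Set.mem_insert_iff, Set.mem_preimage,
      Set.mem_singleton_iff]
    grind
  rw [this, Set.encard_insert_of_notMem hpv]

lemma exists_recursive {α : Type*} (h : IsParentFunction p r) (a : α) (f : V → α → α) :
    ∃ g : V → α, g r = a ∧ ∀ x, x ≠ r → g x = f x (g (p x)) := by
  classical
  let depth (x : V) : ℕ := Nat.find (h.exists_iterate x)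
  let value (n : ℕ) : V → α := n.rec (fun _ => a) fun _ ih x => f x (ih (p x))
  refine ⟨fun x => value (depth x) x, ?_, fun x hx => ?_⟩
  · have : depth r = 0 := (Nat.find_eq_zero _).2 rfl
    simp only [this, value, Nat.rec_zero]
  · have : depth x = depth (p x) + 1 := Nat.find_comp_succ _ (h.exists_iterate (p x)) hx
    simp only [this, value]

end IsParentFunction

section PathToRoot

variable {T : SimpleGraph V} {w : ∀ v, T.Walk v r}

lemma isParentFunction_snd (hT : T.IsTree) (hw : ∀ v, (w v).IsPath) :
    IsParentFunction (fun v => (w v).snd) r := by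
  have path_unique {v : V} {q : T.Walk v r} (hq : q.IsPath) : w v = q :=
    (hT.existsUnique_path v r).unique (hw v) hq
  have iterate_length (n : ℕ) : ∀ v, (w v).length = n → (fun v => (w v).snd)^[n] v = r := by
    induction n with
    | zero => exact fun v hv => Walk.eq_of_length_eq_zero hv
    | succ n ih =>
      intro v hv
      have hnil : ¬ (w v).Nil := fun h => by simp [Walk.length_eq_zero_iff.2 h] at hv
      have htail : w (w v).snd = (w v).tail := path_unique (hw v).tail
      have := Walk.length_tail_add_one hnil
      exact ih (w v).snd (by rw [htail]; lia)
  exact ⟨congrArg Walk.snd (path_unique Walk.IsPath.nil), fun v => ⟨_, iterate_length _ v rfl⟩⟩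

lemma functionForest_snd (hT : T.IsTree) (hw : ∀ v, (w v).IsPath) :
    functionForest (fun v => (w v).snd) = T := by
  have parent := isParentFunction_snd hT hw
  have adj_snd {v : V} (hv : v ≠ r) : T.Adj v (w v).snd := (w v).adj_snd (Walk.not_nil_of_ne hv)
  have ne_root {x y : V} (hxy : T.Adj x y) (hx : (w x).snd = y) : x ≠ r := by
    rintro rfl
    exact hxy.ne (parent.root.symm.trans hx)
  refine le_antisymm (fun x y hxy => ?_) fun x y hxy => parent.adj_iff.2 ?_
  · obtain ⟨hx, rfl⟩ | ⟨hy, rfl⟩ := parent.adj_iff.1 hxy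
    · exact adj_snd hx
    · exact (adj_snd hy).symm
  · by_cases hy : y ∈ (w x).support
    · have hsnd : (w x).snd = y := (hT.isAcyclic.eq_snd_of_adj_start (hw x) hxy hy).symm
      exact Or.inl ⟨ne_root hxy hsnd, hsnd⟩
    · have hcons : w y = .cons hxy.symm (w x) :=
        (hT.existsUnique_path y r).unique (hw y) ((hw x).cons hy)
      have hsnd : (w y).snd = x := by rw [hcons, Walk.snd_cons]
      exact Or.inr ⟨ne_root hxy.symm hsnd, hsnd⟩

end PathToRoot

theorem exists_isParentFunction_of_isTree {T : SimpleGraph V} (hT : T.IsTree) (r : V) :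
    ∃ p : V → V, IsParentFunction p r ∧ functionForest p = T := by
  choose w hw using fun v => (hT.existsUnique_path v r).exists
  exact ⟨_, isParentFunction_snd hT hw, functionForest_snd hT hw⟩

end FunctionForest

section Rehanging

variable {V : Type*} {p q : V → V} {r : V} {idx keep : V → ℕ} {d : ℕ}

lemma exists_bijOn_Iio_ncard {s : Set V} (hs : s.Finite) (a : V) :
    ∃ e : V → ℕ, Set.BijOn e s (Set.Iio s.ncard) ∧ (a ∈ s → e a = 0) := by
  have hcard : s.encard = (Set.Iio s.ncard).encard :=
    hs.cast_ncard_eq.symm.trans (Set.Nat.encard_range _).symm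
  obtain ⟨e, he⟩ := hs.exists_bijOn_of_encard_eq hcard
  by_cases ha : a ∈ s
  · have h0 : 0 ∈ Set.Iio s.ncard := (Set.ncard_pos hs).2 ⟨a, ha⟩
    exact ⟨Equiv.swap 0 (e a) ∘ e, (Equiv.bijOn_swap h0 (he.mapsTo ha)).comp he,
      fun _ => Equiv.swap_apply_right _ _⟩
  · exact ⟨e, he, fun h => absurd h ha⟩

/-- `idx` numbers the children of each vertex consecutively from `0`, where `p` is a parent
function. The root `r` gets the number `0` among its own children. -/
structure IsSiblingNumbering (p : V → V) (r : V) (idx : V → ℕ) : Prop where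
  bijOn : ∀ v, Set.BijOn idx (p ⁻¹' {v}) (Set.Iio (p ⁻¹' {v}).ncard)
  root : idx r = 0

lemma exists_isSiblingNumbering (hfin : ∀ v, (p ⁻¹' {v}).Finite) (r : V) :
    ∃ idx, IsSiblingNumbering p r idx := by
  choose e he he_root using fun v => exists_bijOn_Iio_ncard (hfin v) r
  exact ⟨fun x => e (p x) x, fun v => (he v).congr fun x hx => by rw [← show p x = v from hx],
    he_root _ rfl⟩

/-- `q` is obtained from the parent function `p` by leaving the first `keep v` children of each
vertex `v` in place and rehanging every later child on the sibling numbered just before it. -/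
structure IsRehanging (p : V → V) (idx keep : V → ℕ) (q : V → V) : Prop where
  eq_parent : ∀ x, idx x < keep (p x) → q x = p x
  parent_eq : ∀ x, keep (p x) ≤ idx x → p (q x) = p x
  idx_add_one : ∀ x, keep (p x) ≤ idx x → idx (q x) + 1 = idx x

lemma IsSiblingNumbering.exists_isRehanging (hidx : IsSiblingNumbering p r idx)
    (hkeep : ∀ v, 1 ≤ keep v) : ∃ q, IsRehanging p idx keep q := by
  have exists_parent (x : V) : ∃ y, (idx x < keep (p x) → y = p x) ∧
      (keep (p x) ≤ idx x → p y = p x ∧ idx y + 1 = idx x) := by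
    obtain hx | hx := lt_or_ge (idx x) (keep (p x))
    · exact ⟨p x, fun _ => rfl, fun h => absurd h hx.not_ge⟩
    · have hlt : idx x < (p ⁻¹' {p x}).ncard := (hidx.bijOn (p x)).mapsTo rfl
      obtain ⟨y, hy, hyx⟩ :=
        (hidx.bijOn (p x)).surjOn (Set.mem_Iio.2 ((Nat.sub_le (idx x) 1).trans_lt hlt))
      have := (hkeep (p x)).trans hx
      exact ⟨y, fun h => absurd h hx.not_gt, fun _ => ⟨hy, by lia⟩⟩
  choose q hq_lt hq_le using exists_parent
  exact ⟨q, hq_lt, fun x hx => (hq_le x hx).1, fun x hx => (hq_le x hx).2⟩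

namespace IsRehanging

lemma eq_or_parent_eq (hq : IsRehanging p idx keep q) (x : V) : q x = p x ∨ p (q x) = p x :=
  (lt_or_ge _ _).imp (hq.eq_parent x) (hq.parent_eq x)

lemma exists_iterate_eq_parent (hq : IsRehanging p idx keep q) (x : V) : ∃ n, q^[n] x = p x := by
  induction hx : idx x using Nat.strong_induction_on generalizing x with
  | _ i ih =>
    obtain hlt | hle := lt_or_ge (idx x) (keep (p x))
    · exact ⟨1, hq.eq_parent x hlt⟩
    · obtain ⟨n, hn⟩ := ih _ (by have := hq.idx_add_one x hle; lia) (q x) rfl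
      exact ⟨n + 1, hn.trans (hq.parent_eq x hle)⟩

theorem isParentFunction (hq : IsRehanging p idx keep q) (h : IsParentFunction p r)
    (hr : idx r < keep r) : IsParentFunction q r where
  root := (hq.eq_parent r (h.root.symm ▸ hr)).trans h.root
  exists_iterate x := by
    obtain ⟨n, hn⟩ := h.exists_iterate x
    induction n generalizing x with
    | zero => exact ⟨0, hn⟩
    | succ n ih =>
      obtain ⟨m, hm⟩ := ih (p x) hn
      obtain ⟨l, hl⟩ := hq.exists_iterate_eq_parent x
      exact ⟨m + l, by rw [iterate_add_apply, hl, hm]⟩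

lemma fiber_eq (hq : IsRehanging p idx keep q) (hidx : IsSiblingNumbering p r idx) (v : V) :
    q ⁻¹' {v} = {x | p x = v ∧ idx x < keep v} ∪
      {x | p x = p v ∧ idx x = idx v + 1 ∧ keep (p v) ≤ idx x} := by
  ext x
  simp only [Set.mem_preimage, Set.mem_singleton_iff, Set.mem_union, Set.mem_ofPred_eq]
  constructor
  · rintro rfl
    obtain hlt | hle := lt_or_ge (idx x) (keep (p x))
    · have := hq.eq_parent x hlt
      exact Or.inl ⟨this.symm, this.symm ▸ hlt⟩
    · have := hq.parent_eq x hle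
      exact Or.inr ⟨this.symm, (hq.idx_add_one x hle).symm, this.symm ▸ hle⟩
  · rintro (⟨rfl, hlt⟩ | ⟨hpx, hix, hle⟩)
    · exact hq.eq_parent x hlt
    · rw [← hpx] at hle
      have := hq.idx_add_one x hle
      exact (hidx.bijOn (p v)).injOn ((hq.parent_eq x hle).trans hpx) rfl (by lia)

open Classical in
lemma encard_fiber (hq : IsRehanging p idx keep q) (hidx : IsSiblingNumbering p r idx) {v : V}
    (hv : keep v ≤ (p ⁻¹' {v}).ncard) :
    (q ⁻¹' {v}).encard =
      keep v + if ∃ y, p y = p v ∧ idx y = idx v + 1 ∧ keep (p v) ≤ idx y then 1 else 0 := by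
  have hdisj : Disjoint {x | p x = v ∧ idx x < keep v}
      {x | p x = p v ∧ idx x = idx v + 1 ∧ keep (p v) ≤ idx x} := by
    refine Set.disjoint_left.2 fun x ⟨hx, hlt⟩ ⟨hpx, _, hle⟩ => ?_
    rw [← hpx, hx] at hle
    exact hlt.not_ge hle
  have kept : {x | p x = v ∧ idx x < keep v}.encard = keep v := by
    have himage : idx '' {x | p x = v ∧ idx x < keep v} = Set.Iio (keep v) := by
      refine Set.Subset.antisymm (Set.image_subset_iff.2 fun x hx => hx.2) fun i hi => ?_
      obtain ⟨x, hx, rfl⟩ := (hidx.bijOn v).surjOn (lt_of_lt_of_le hi hv)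
      exact ⟨x, ⟨hx, hi⟩, rfl⟩
    have hinj : Set.InjOn idx {x | p x = v ∧ idx x < keep v} :=
      (hidx.bijOn v).injOn.mono fun x hx => hx.1
    rw [← hinj.encard_image, himage]
    exact Set.Nat.encard_range _
  have rehung : {x | p x = p v ∧ idx x = idx v + 1 ∧ keep (p v) ≤ idx x}.encard =
      if ∃ y, p y = p v ∧ idx y = idx v + 1 ∧ keep (p v) ≤ idx y then 1 else 0 := by
    split_ifs with h
    · obtain ⟨y, hy⟩ := h
      refine Set.encard_eq_one.2 ⟨y, Set.eq_singleton_iff_unique_mem.2 ⟨hy, fun x hx => ?_⟩⟩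
      exact (hidx.bijOn (p v)).injOn hx.1 hy.1 (hx.2.1.trans hy.2.1.symm)
    · exact Set.encard_eq_zero.2 (Set.eq_empty_of_forall_notMem fun y hy => h ⟨y, hy⟩)
  rw [hq.fiber_eq hidx, Set.encard_union_eq hdisj, kept, rehung]

end IsRehanging

theorem IsParentFunction.exists_regular_parent (h : IsParentFunction p r)
    (hfin : ∀ v, (p ⁻¹' {v}).Finite) (hd : 2 ≤ d) (hroot : d + 2 ≤ (p ⁻¹' {r}).ncard)
    (hle : ∀ v, v ≠ r → d ≤ (p ⁻¹' {v}).ncard) :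
    ∃ q, IsParentFunction q r ∧ (q ⁻¹' {r}).encard = d + 2 ∧
      (∀ v, v ≠ r → (q ⁻¹' {v}).encard = d) ∧ ∀ x, q x = p x ∨ p (q x) = p x := by
  classical
  obtain ⟨idx, hidx⟩ := exists_isSiblingNumbering hfin r
  -- A vertex on which its next sibling gets rehung keeps one child less to make room for it.
  obtain ⟨keep, keep_root, keep_of_ne⟩ := h.exists_recursive (d + 2) fun x m =>
    if ∃ y, p y = p x ∧ idx y = idx x + 1 ∧ m ≤ idx y then d - 1 else d
  have one_le_keep (v : V) : 1 ≤ keep v := by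
    obtain rfl | hv := eq_or_ne v r
    · lia
    · rw [keep_of_ne v hv]
      split_ifs <;> lia
  obtain ⟨q, hq⟩ := hidx.exists_isRehanging one_le_keep
  refine ⟨q, hq.isParentFunction h (hidx.root ▸ one_le_keep r), ?_, fun v hv => ?_,
    hq.eq_or_parent_eq⟩
  · have hnext : ¬ ∃ y, p y = p r ∧ idx y = idx r + 1 ∧ keep (p r) ≤ idx y := by
      rintro ⟨y, -, hy, hle⟩
      rw [h.root, keep_root, hy, hidx.root] at hle
      lia
    rw [hq.encard_fiber hidx (keep_root ▸ hroot), if_neg hnext, keep_root]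
    norm_cast
  · have keep_le : keep v ≤ d := by
      rw [keep_of_ne v hv]
      split_ifs <;> lia
    rw [hq.encard_fiber hidx (keep_le.trans (hle v hv)), keep_of_ne v hv]
    split_ifs
    · norm_cast
      lia
    · rw [add_zero]

theorem exists_regular_isTree_le_graphPower_two {T : SimpleGraph V} {k : ℕ} (hT : T.IsTree)
    (hk : 2 < k) (hfin : ∀ v, (T.neighborSet v).Finite) (hdeg : ∀ v, k ≤ (T.neighborSet v).encard) :
    ∃ T' ≤ graphPower T 2, T'.IsTree ∧ ∀ v, (T'.neighborSet v).encard = k := by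
  obtain ⟨r⟩ := hT.connected.nonempty
  obtain ⟨p, hp, rfl⟩ := exists_isParentFunction_of_isTree hT r
  obtain ⟨d, rfl⟩ : ∃ d, k = d + 1 := Nat.exists_eq_add_of_le' (by lia)
  have fiber_finite (v : V) : (p ⁻¹' {v}).Finite := by
    refine Set.encard_lt_top_iff.1 ((encard_fiber_le_encard_neighborSet_add_one p v).trans_lt ?_)
    exact ENat.add_lt_top.2 ⟨(hfin v).encard_lt_top, ENat.one_lt_top⟩
  have root_fiber : d + 2 ≤ (p ⁻¹' {r}).ncard := by
    have := add_le_add_left (hdeg r) 1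
    rw [hp.encard_neighborSet_root_add_one, ← (fiber_finite r).cast_ncard_eq] at this
    exact mod_cast this
  have fiber (v : V) (hv : v ≠ r) : d ≤ (p ⁻¹' {v}).ncard := by
    have := hdeg v
    rw [hp.encard_neighborSet_of_ne_root hv, ← (fiber_finite v).cast_ncard_eq] at this
    norm_cast at this
    lia
  obtain ⟨q, hq, hqr, hqv, hqp⟩ := hp.exists_regular_parent fiber_finite (by lia) root_fiber fiber
  refine ⟨functionForest q, functionForest_le_graphPower fun x => ?_, hq.isTree, fun v => ?_⟩
  · obtain hx | hx := hqp x
    · rw [hx]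
      exact (hp.edist_parent_le_one x).trans (by norm_num)
    · calc _ ≤ (functionForest p).edist x (p x) + (functionForest p).edist (p x) (q x) :=
          SimpleGraph.edist_triangle
        _ ≤ 1 + 1 := add_le_add (hp.edist_parent_le_one x)
          (by rw [← hx, SimpleGraph.edist_comm]; exact hp.edist_parent_le_one (q x))
        _ = (2 : ℕ) := by norm_num
  · obtain rfl | hv := eq_or_ne v r
    · have : ((functionForest q).neighborSet v).encard + 1 = (d + 1 : ℕ) + 1 := by
        rw [hq.encard_neighborSet_root_add_one, hqr]
        push_cast
        ring
      exact ENat.add_left_injective_of_ne_top ENat.one_ne_top this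
    · rw [hq.encard_neighborSet_of_ne_root hv, hqv v hv]
      norm_cast

end Rehanging

section RegularSpanningTree

variable {V : Type*} {Γ T : SimpleGraph V} {k n : ℕ}

theorem GraphNonamenable.exists_regular_isTree_le_graphPower (h : GraphNonamenable Γ)
    (hconn : Γ.Connected) (hΓ : ∀ v, (Γ.neighborSet v).Finite) (hk : 2 < k) :
    ∃ n, ∃ T ≤ graphPower Γ n, T.IsTree ∧ ∀ v, (T.neighborSet v).encard = k := by
  obtain ⟨n, p, hp, hfiber⟩ := h.exists_le_encard_fiber hΓ (k + 1)
  have forest_le : functionForest p ≤ graphPower Γ (n + 1) :=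
    (functionForest_le_graphPower hp).trans (graphPower_mono n.le_succ)
  obtain ⟨T, hpT, hTΓ, hT⟩ :=
    (hconn.mono (le_graphPower n.succ_pos)).exists_isTree_le_of_le_of_isAcyclic
      forest_le (isAcyclic_functionForest p)
  have finite_neighborSet (v : V) : (T.neighborSet v).Finite :=
    (finite_neighborSet_graphPower hΓ (n + 1) v).subset fun u hu => hTΓ hu
  have le_degree (v : V) : k ≤ (T.neighborSet v).encard := by
    have hforest : (k + 1 : ℕ) ≤ ((functionForest p).neighborSet v).encard + 1 :=
      (hfiber v).trans (encard_fiber_le_encard_neighborSet_add_one p v)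
    push_cast at hforest
    exact ((ENat.add_le_add_iff_right ENat.one_ne_top).1 hforest).trans
      (Set.encard_le_encard fun u hu => hpT hu)
  obtain ⟨T', hT'T, hT', hdeg⟩ :=
    exists_regular_isTree_le_graphPower_two hT hk finite_neighborSet le_degree
  exact ⟨_, T', hT'T.trans (graphPower_le_graphPower_mul hTΓ), hT', hdeg⟩

theorem graphNonamenable_of_isTree_le_graphPower (hT : T.IsTree) (hTΓ : T ≤ graphPower Γ n)
    (hdeg : ∀ v, 3 ≤ (T.neighborSet v).encard) : GraphNonamenable Γ := by
  obtain ⟨r⟩ := hT.connected.nonempty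
  obtain ⟨p, hp, rfl⟩ := exists_isParentFunction_of_isTree hT r
  refine graphNonamenable_of_two_le_encard_fiber (p := p)
    (fun x => edist_le_of_le_graphPower hTΓ (m := 1) (hp.edist_parent_le_one x)) fun v => ?_
  obtain rfl | hv := eq_or_ne v r
  · calc (2 : ℕ∞) ≤ 3 + 1 := by norm_num
      _ ≤ ((functionForest p).neighborSet v).encard + 1 := add_le_add_left (hdeg v) 1
      _ = _ := hp.encard_neighborSet_root_add_one
  · have := hdeg v
    rw [hp.encard_neighborSet_of_ne_root hv, ← two_add_one_eq_three] at this
    exact (ENat.add_le_add_iff_right ENat.one_ne_top).1 this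

end RegularSpanningTree

section CayleyGraph

variable {G : Type*} [Group G] {S S' : Set G} {g h : G}

lemma cayleyGraph_adj : (cayleyGraph S).Adj g h ↔ g ≠ h ∧ (g⁻¹ * h ∈ S ∨ h⁻¹ * g ∈ S) := by
  simp only [cayleyGraph, fromRel_adj, Set.mem_union, Set.mem_inv, mul_inv_rev, inv_inv]
  tauto

lemma finite_neighborSet_cayleyGraph (hS : S.Finite) (g : G) :
    ((cayleyGraph S).neighborSet g).Finite := by
  refine ((hS.union hS.inv).image (g * ·)).subset fun h hgh => ⟨g⁻¹ * h, ?_, by simp⟩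
  simpa using (cayleyGraph_adj.1 hgh).2

lemma reachable_cayleyGraph_iff :
    (cayleyGraph S).Reachable g h ↔ g⁻¹ * h ∈ Subgroup.closure S := by
  constructor
  · rintro ⟨w⟩
    induction w with
    | nil => simp
    | @cons a b c hab _ ih =>
      have hmem : a⁻¹ * b ∈ Subgroup.closure S := by
        obtain hs | hs := (cayleyGraph_adj.1 hab).2
        · exact Subgroup.subset_closure hs
        · simpa using inv_mem (Subgroup.subset_closure hs)
      simpa [mul_assoc] using mul_mem hmem ih
  · have reachable_mul {x : G} (hx : x ∈ Subgroup.closure S) :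
        ∀ g, (cayleyGraph S).Reachable g (g * x) := by
      induction hx using Subgroup.closure_induction with
      | mem s hs =>
        intro g
        obtain heq | hne := eq_or_ne g (g * s)
        · exact heq ▸ .rfl
        · exact Adj.reachable (cayleyGraph_adj.2 ⟨hne, Or.inl (by simpa using hs)⟩)
      | one => simp
      | mul x y _ _ hx hy => exact fun g => (hx g).trans (by simpa [mul_assoc] using hy (g * x))
      | inv x _ hx => exact fun g => (by simpa using hx (g * x⁻¹) : Reachable _ _ _).symm
    exact fun hgh => by simpa using reachable_mul hgh g

theorem connected_cayleyGraph_iff : (cayleyGraph S).Connected ↔ Subgroup.closure S = ⊤ := by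
  rw [connected_iff_exists_forall_reachable, Subgroup.eq_top_iff']
  refine ⟨fun ⟨g, hg⟩ x => ?_, fun h => ⟨1, fun x => reachable_cayleyGraph_iff.2 (h _)⟩⟩
  simpa using reachable_cayleyGraph_iff.1 (hg (g * x))

lemma edist_cayleyGraph_mul_left (a g h : G) :
    (cayleyGraph S).edist (a * g) (a * h) = (cayleyGraph S).edist g h := by
  let translate (b : G) : cayleyGraph S →g cayleyGraph S :=
    ⟨(b * ·), fun h => by simpa [cayleyGraph_adj, mul_assoc] using h⟩
  refine le_antisymm (edist_map_le (translate a) g h) ?_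
  simpa [translate] using edist_map_le (translate a⁻¹) (a * g) (a * h)

lemma edist_cayleyGraph (g h : G) :
    (cayleyGraph S).edist g h = (cayleyGraph S).edist 1 (g⁻¹ * h) := by
  rw [← edist_cayleyGraph_mul_left g⁻¹, inv_mul_cancel]

theorem graphPower_cayleyGraph (S : Set G) (n : ℕ) :
    graphPower (cayleyGraph S) n = cayleyGraph {a | (cayleyGraph S).edist 1 a ≤ n} := by
  ext g h
  simp only [cayleyGraph_adj, Set.mem_ofPred_eq, ← edist_cayleyGraph, edist_comm (u := h), or_self]
  rfl

theorem exists_cayleyGraph_le_graphPower (hS : S.Finite) (hS' : Subgroup.closure S' = ⊤) :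
    ∃ n, cayleyGraph S ≤ graphPower (cayleyGraph S') n := by
  have hconn := connected_cayleyGraph_iff.2 hS'
  obtain ⟨n, hn⟩ := (hS.image ((cayleyGraph S').dist 1)).bddAbove
  have edist_le (s : G) (hs : s ∈ S) : (cayleyGraph S').edist 1 s ≤ n := by
    rw [← (hconn 1 s).coe_dist_eq_edist]
    exact mod_cast hn (Set.mem_image_of_mem _ hs)
  refine ⟨n, fun g h hgh => ⟨hgh.ne, ?_⟩⟩
  obtain hs | hs := (cayleyGraph_adj.1 hgh).2
  · exact (edist_cayleyGraph g h).trans_le (edist_le _ hs)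
  · exact edist_comm.trans_le ((edist_cayleyGraph h g).trans_le (edist_le _ hs))

end CayleyGraph

/-- A finitely generated group is non-amenable if and only if, for any fixed `k > 2`, it
has a Cayley graph admitting a spanning tree which is regular of degree `k`. -/
theorem nonamenable_iff_regular_spanning_tree
    (G : Type*) [Group G] [Group.FG G] (k : ℕ) (hk : 2 < k) :
    GroupNonamenable G ↔
      ∃ S : Set G, IsFinGenSet S ∧ ∃ T : SimpleGraph G, T ≤ cayleyGraph S ∧ T.IsTree ∧
        ∀ v : G, (T.neighborSet v).encard = (k : ℕ∞) := by
  constructor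
  · intro hG
    obtain ⟨S, hgen, hS⟩ := Group.fg_iff.1 ‹Group.FG G›
    have hfin := finite_neighborSet_cayleyGraph hS
    obtain ⟨n, T, hTS, hT, hdeg⟩ := (hG S ⟨hS, hgen⟩).exists_regular_isTree_le_graphPower
      (connected_cayleyGraph_iff.2 hgen) hfin hk
    rw [graphPower_cayleyGraph] at hTS
    exact ⟨_, ⟨finite_setOf_edist_le hfin n 1,
      connected_cayleyGraph_iff.1 (hT.connected.mono hTS)⟩, T, hTS, hT, hdeg⟩
  · rintro ⟨S', ⟨hS', -⟩, T, hTS', hT, hdeg⟩ S ⟨-, hgen⟩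
    obtain ⟨n, hn⟩ := exists_cayleyGraph_le_graphPower hS' hgen
    exact graphNonamenable_of_isTree_le_graphPower hT (hTS'.trans hn) fun v =>
      (hdeg v).symm ▸ mod_cast hk
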